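/- Let ρ > 0, define τ(x) = 1 − ρx + (ρ/2)·sin(2x) and q₀(x) = −2·(d²/dx²) log τ(x). Then x·q₀(x) + 4·sin(2x) → 0 as x → −∞; that is, q₀(x) ∼ −4 sin(2x)/x as x → −∞. -/

import Mathlib

/-!
Write `s = sin 2x`, `c = cos 2x`. On `x < 0` one has `τ ≥ 1`, so
`(log τ)'' = τ''/τ - (τ'/τ)²` there, with `τ' = -ρ(1 - c)` and `τ'' = -2ρs`. Eliminating the
explicit factor `x` through `ρx = 1 + (ρ/2)s - τ` gives
`x q₀ + 4s = F(x) τ⁻¹ + G(x) (τ⁻¹)²` with `F`, `G` trigonometric polynomials, hence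
bounded (`mul_qWvN_add`). As `τ → ∞` when `x → -∞` (`tendsto_tauLeft_atBot`), both terms vanish.
-/

open Filter Topology

/-- The tau function on the left half-line: `τ(x) = 1 - ρx + (ρ/2) sin 2x`. -/
noncomputable def tauLeft (ρ : ℝ) (x : ℝ) : ℝ :=
  1 - ρ * x + (ρ / 2) * Real.sin (2 * x)

/-- The associated Wigner–von Neumann type potential `q₀ = -2 ∂ₓ² log τ`. -/
noncomputable def qWvN (ρ : ℝ) (x : ℝ) : ℝ :=
  -2 * deriv (deriv (fun t => Real.log (tauLeft ρ t))) x

lemma one_le_tauLeft {ρ : ℝ} (hρ : 0 < ρ) {x : ℝ} (hx : x ≤ 0) : 1 ≤ tauLeft ρ x := by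
  have h : 2 * x ≤ Real.sin (2 * x) := by
    have := Real.sin_le (x := -(2 * x)) (by linarith)
    rw [Real.sin_neg] at this
    linarith
  unfold tauLeft
  nlinarith

lemma tendsto_tauLeft_atBot {ρ : ℝ} (hρ : 0 < ρ) : Tendsto (tauLeft ρ) atBot atTop := by
  have h : Tendsto (fun x : ℝ => (1 - ρ / 2) + (-ρ) * x) atBot atTop :=
    tendsto_atTop_add_const_left _ _ (tendsto_id.const_mul_atBot_of_neg (by linarith))
  refine tendsto_atTop_mono (fun x => ?_) h
  unfold tauLeft
  nlinarith [Real.neg_one_le_sin (2 * x)]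

lemma hasDerivAt_tauLeft (ρ x : ℝ) :
    HasDerivAt (tauLeft ρ) (-ρ * (1 - Real.cos (2 * x))) x := by
  have h2 : HasDerivAt (fun t : ℝ => 2 * t) 2 x := by
    simpa using (hasDerivAt_id x).const_mul (2 : ℝ)
  have h := (((hasDerivAt_id x).const_mul ρ).const_sub 1).add (h2.sin.const_mul (ρ / 2))
  refine h.congr_deriv ?_
  ring

lemma qWvN_eq {ρ : ℝ} (hρ : 0 < ρ) {x : ℝ} (hx : x < 0) :
    qWvN ρ x = -2 * ((-2 * ρ * Real.sin (2 * x) * tauLeft ρ x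
      - (ρ * (1 - Real.cos (2 * x))) ^ 2) / tauLeft ρ x ^ 2) := by
  -- The formula for the first derivative is needed on a neighbourhood of `x`.
  have h1 : deriv (fun t => Real.log (tauLeft ρ t)) =ᶠ[𝓝 x]
      fun t => (-ρ * (1 - Real.cos (2 * t))) / tauLeft ρ t := by
    filter_upwards [Iio_mem_nhds hx] with t ht
    have := one_le_tauLeft hρ (le_of_lt ht)
    exact ((hasDerivAt_tauLeft ρ t).log (by linarith)).deriv
  have h0 : tauLeft ρ x ≠ 0 := by linarith [one_le_tauLeft hρ hx.le]
  have h2 : HasDerivAt (fun t : ℝ => 2 * t) 2 x := by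
    simpa using (hasDerivAt_id x).const_mul (2 : ℝ)
  have h3 := ((h2.cos.const_sub 1).const_mul (-ρ)).div (hasDerivAt_tauLeft ρ x) h0
  unfold qWvN
  rw [h1.deriv_eq]
  erw [h3.deriv]
  ring

/-- The quantity of interest, with the factor `x` eliminated using
`ρ x = 1 + (ρ / 2) sin 2x - τ`. -/
lemma mul_qWvN_add {ρ : ℝ} (hρ : 0 < ρ) {x : ℝ} (hx : x < 0) :
    x * qWvN ρ x + 4 * Real.sin (2 * x) =
      (4 * Real.sin (2 * x) * (1 + ρ / 2 * Real.sin (2 * x))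
        - 2 * ρ * (1 - Real.cos (2 * x)) ^ 2) * (tauLeft ρ x)⁻¹
      + (2 * ρ * (1 - Real.cos (2 * x)) ^ 2 * (1 + ρ / 2 * Real.sin (2 * x)))
        * ((tauLeft ρ x)⁻¹ * (tauLeft ρ x)⁻¹) := by
  have h0 : tauLeft ρ x ≠ 0 := by linarith [one_le_tauLeft hρ hx.le]
  have hxe : x = (1 + ρ / 2 * Real.sin (2 * x) - tauLeft ρ x) / ρ := by
    rw [eq_div_iff hρ.ne']
    unfold tauLeft
    ring
  rw [qWvN_eq hρ hx]
  generalize tauLeft ρ x = T at *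
  generalize Real.sin (2 * x) = s at *
  generalize Real.cos (2 * x) = c at *
  rw [hxe]
  field_simp
  ring

/-- `q₀(x) ∼ -4 sin 2x / x` as `x → -∞`. -/
theorem seed_potential_asymptotics (ρ : ℝ) (hρ : 0 < ρ) :
    Tendsto (fun x : ℝ => x * qWvN ρ x + 4 * Real.sin (2 * x))
      atBot (𝓝 0) := by
  have hu : Tendsto (fun x => (tauLeft ρ x)⁻¹) atBot (𝓝 0) :=
    tendsto_inv_atTop_zero.comp (tendsto_tauLeft_atBot hρ)
  have huu : Tendsto (fun x => (tauLeft ρ x)⁻¹ * (tauLeft ρ x)⁻¹) atBot (𝓝 0) := by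
    simpa using hu.mul hu
  have hb (x : ℝ) : |1 + ρ / 2 * Real.sin (2 * x)| ≤ 1 + ρ := by
    rw [abs_le]
    constructor <;> nlinarith [Real.neg_one_le_sin (2 * x), Real.sin_le_one (2 * x)]
  have hc (x : ℝ) : |2 * ρ * (1 - Real.cos (2 * x)) ^ 2| ≤ 8 * ρ := by
    have h : (1 - Real.cos (2 * x)) ^ 2 ≤ 4 := by
      nlinarith [Real.neg_one_le_cos (2 * x), Real.cos_le_one (2 * x)]
    rw [abs_of_nonneg (by positivity)]
    nlinarith
  have hF (x : ℝ) : |4 * Real.sin (2 * x) * (1 + ρ / 2 * Real.sin (2 * x))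
      - 2 * ρ * (1 - Real.cos (2 * x)) ^ 2| ≤ 4 * (1 + ρ) + 8 * ρ := by
    refine (abs_sub _ _).trans (add_le_add ?_ (hc x))
    rw [abs_mul]
    refine mul_le_mul ?_ (hb x) (abs_nonneg _) (by norm_num)
    rw [abs_mul, abs_of_pos (by norm_num : (0 : ℝ) < 4)]
    linarith [Real.abs_sin_le_one (2 * x)]
  have hG (x : ℝ) : |2 * ρ * (1 - Real.cos (2 * x)) ^ 2 * (1 + ρ / 2 * Real.sin (2 * x))|
      ≤ 8 * ρ * (1 + ρ) := by
    rw [abs_mul]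
    exact mul_le_mul (hc x) (hb x) (abs_nonneg _) (by positivity)
  have h1 := bdd_le_mul_tendsto_zero' _ (Eventually.of_forall hF) hu
  have h2 := bdd_le_mul_tendsto_zero' _ (Eventually.of_forall hG) huu
  have h := h1.add h2
  rw [add_zero] at h
  refine h.congr' ?_
  filter_upwards [eventually_lt_atBot (0 : ℝ)] with x hx
  exact (mul_qWvN_add hρ hx).symm
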